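/- arXiv:1812.00042 — 2 statements merged into one kernel-verified Lean document; each statement's English description precedes it below -/
import Mathlib

section
/- Let K be a field of characteristic zero and let A₁ = K⟨X, Y | YX − XY = 1⟩ be the first Weyl algebra. If P, Q ∈ A₁ satisfy m(P) ≤ 2 and m(Q) ≤ 2 and [P,Q] = PQ − QP = 1, then there exists a K-algebra automorphism τ of A₁ such that P = τ(Y) and Q = τ(X). -/
open Polynomial

noncomputable section

variable (K : Type) [Field K] [CharZero K]

/-- Defining relation of the first Weyl algebra: `Y*X = X*Y + 1`, i.e. `[Y,X] = 1`
(`true` encodes `X`, `false` encodes `Y`). -/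
inductive WeylRel : FreeAlgebra K Bool → FreeAlgebra K Bool → Prop
  | comm : WeylRel (FreeAlgebra.ι K false * FreeAlgebra.ι K true)
      (FreeAlgebra.ι K true * FreeAlgebra.ι K false + 1)

/-- The first Weyl algebra `A₁ = K⟨X,Y | YX - XY = 1⟩`. -/
abbrev Weyl : Type := RingQuot (WeylRel K)

/-- The generator `X` of the Weyl algebra. -/
def Wx : Weyl K := RingQuot.mkAlgHom K (WeylRel K) (FreeAlgebra.ι K true)

/-- The generator `Y` of the Weyl algebra. -/
def Wy : Weyl K := RingQuot.mkAlgHom K (WeylRel K) (FreeAlgebra.ι K false)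

/-- The element `H = Y*X`. -/
def WH : Weyl K := Wy K * Wx K

/-- `X^n` for `n ≥ 0` and `Y^{-n}` for `n < 0`. -/
def weight (n : ℤ) : Weyl K := if 0 ≤ n then Wx K ^ n.toNat else Wy K ^ (-n).toNat

/-- The `n`-th homogeneous component `A_{1,n}` of the `ℤ`-grading of the Weyl algebra:
`K[H]·Xⁿ` for `n ≥ 0` and `K[H]·Y^{-n}` for `n < 0`. -/
def component (n : ℤ) : Submodule K (Weyl K) :=
  LinearMap.range ((LinearMap.mulRight K (weight K n)).comp
    (Polynomial.aeval (WH K)).toLinearMap)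

set_option linter.unusedSectionVars false
set_option linter.unusedSimpArgs false

section lift
variable {B : Type*} [Ring B] [Algebra K B]

theorem Wrel : Wy K * Wx K = Wx K * Wy K + 1 := by
  have h := RingQuot.mkAlgHom_rel K (WeylRel.comm (K := K))
  simpa [Wx, Wy] using h

def wlift (x y : B) (h : y * x = x * y + 1) : Weyl K →ₐ[K] B :=
  RingQuot.liftAlgHom K ⟨FreeAlgebra.lift K (fun b : Bool => if b then x else y), by
    intro a b hab
    cases hab
    simp [h]⟩

@[simp] theorem wlift_x (x y : B) (h : y * x = x * y + 1) : wlift K x y h (Wx K) = x := by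
  simp [wlift, Wx]

@[simp] theorem wlift_y (x y : B) (h : y * x = x * y + 1) : wlift K x y h (Wy K) = y := by
  simp [wlift, Wy]

theorem whom_ext (f g : Weyl K →ₐ[K] B) (hx : f (Wx K) = g (Wx K)) (hy : f (Wy K) = g (Wy K)) :
    f = g := by
  apply RingQuot.ringQuot_ext'
  apply FreeAlgebra.hom_ext
  funext b
  cases b
  · simpa [Wy] using hy
  · simpa [Wx] using hx

end lift

theorem mkAut (x y x' y' : Weyl K) (h : y * x = x * y + 1) (h' : y' * x' = x' * y' + 1)
    (h1 : wlift K x y h x' = Wx K) (h2 : wlift K x y h y' = Wy K)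
    (h3 : wlift K x' y' h' x = Wx K) (h4 : wlift K x' y' h' y = Wy K) :
    ∃ e : Weyl K ≃ₐ[K] Weyl K, y = e (Wy K) ∧ x = e (Wx K) := by
  refine ⟨AlgEquiv.ofAlgHom (wlift K x y h) (wlift K x' y' h') ?_ ?_, ?_, ?_⟩
  · apply whom_ext <;> simp [h1, h2]
  · apply whom_ext <;> simp [h3, h4]
  · simp
  · simp

def Good (P Q : Weyl K) : Prop := ∃ τ : Weyl K ≃ₐ[K] Weyl K, P = τ (Wy K) ∧ Q = τ (Wx K)

variable {K}

theorem comm_aeval {A : Type*} [Ring A] [Algebra K A] (a : A) (p : K[X]) :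
    aeval a p * a = a * aeval a p := by
  have : aeval a (p * X) = aeval a (X * p) := by rw [mul_comm]
  simpa using this

theorem good_id : Good K (Wy K) (Wx K) := ⟨AlgEquiv.refl, rfl, rfl⟩

theorem Good.comp {P Q : Weyl K} (h : Good K P Q) (y x : Weyl K) (h2 : Good K y x) :
    ∃ τ : Weyl K ≃ₐ[K] Weyl K, P = τ (Wy K) ∧ Q = τ (Wx K) ∧ Good K (τ y) (τ x) := by
  obtain ⟨τ, rfl, rfl⟩ := h
  obtain ⟨e, rfl, rfl⟩ := h2
  exact ⟨τ, rfl, rfl, e.trans τ, rfl, rfl⟩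

theorem Good.shear_left {P Q : Weyl K} (h : Good K P Q) (p : K[X]) : Good K (P + aeval Q p) Q := by
  have key : Good K (Wy K + aeval (Wx K) p) (Wx K) := by
    have r := Wrel K
    have c := comm_aeval (Wx K) p
    exact mkAut K _ _ (Wx K) (Wy K - aeval (Wx K) p)
      (by rw [add_mul, mul_add, c, r]; abel) (by rw [sub_mul, mul_sub, c, r]; abel)
      (by simp) (by simp [← aeval_algHom_apply]) (by simp) (by simp [← aeval_algHom_apply])
  obtain ⟨τ, rfl, rfl, h3⟩ := h.comp _ _ key
  simpa [aeval_algHom_apply] using h3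

theorem rotrel1 {B : Type*} [Ring B] (x y : B) (r : y * x = x * y + 1) :
    x * -y = -y * x + 1 := by
  rw [neg_mul, mul_neg, r]; abel

theorem rotrel2 {B : Type*} [Ring B] (x y : B) (r : y * x = x * y + 1) :
    -x * y = y * -x + 1 := by
  rw [neg_mul, mul_neg, r]; abel

theorem Good.rot {P Q : Weyl K} (h : Good K P Q) : Good K Q (-P) := by
  have key : Good K (Wx K) (-Wy K) := by
    have r := Wrel K
    exact mkAut K (-Wy K) (Wx K) (Wy K) (-Wx K) (rotrel1 _ _ r) (rotrel2 _ _ r)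
      (by simp) (by simp) (by simp) (by simp)
  obtain ⟨τ, rfl, rfl, h3⟩ := h.comp _ _ key
  simpa using h3

theorem Good.unrot {P Q : Weyl K} (h : Good K Q (-P)) : Good K P Q := by
  simpa using h.rot.rot.rot

theorem Good.shear_right {P Q : Weyl K} (h : Good K P Q) (p : K[X]) :
    Good K P (Q + aeval P p) := by
  have h3 := (h.rot.rot.rot.shear_left (-p)).rot
  simpa [add_comm] using h3

theorem Good.scale {P Q : Weyl K} (h : Good K P Q) (a b : K) (hab : a * b = 1) :
    Good K (a • P) (b • Q) := by
  have hba : b * a = 1 := by rw [mul_comm, hab]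
  have key : Good K (a • Wy K) (b • Wx K) := by
    have r := Wrel K
    exact mkAut K _ _ (a • Wx K) (b • Wy K) (by simp [smul_smul, hab, hba, r])
      (by simp [smul_smul, hab, hba, r])
      (by simp [smul_smul, hab, hba]) (by simp [smul_smul, hab, hba])
      (by simp [smul_smul, hab, hba]) (by simp [smul_smul, hab, hba])
  obtain ⟨τ, rfl, rfl, h3⟩ := h.comp _ _ key
  simpa using h3
/-- shift -/
abbrev S (i : ℤ) (f : K[X]) : K[X] := taylor (-(i : K)) f

def br (i k : ℤ) (a b : K[X]) : K[X] := a * S i b - b * S k a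

theorem delta_coeff (r : K) (f : K[X]) :
    (f - taylor r f).coeff (f.natDegree - 1) = - (r * f.natDegree * f.leadingCoeff) := by
  rcases Nat.eq_zero_or_pos f.natDegree with h | h
  · rw [eq_C_of_natDegree_eq_zero h]; simp
  · obtain ⟨n, hn⟩ : ∃ n, f.natDegree = n + 1 := ⟨f.natDegree - 1, by omega⟩
    have h1 : (hasseDeriv n f).natDegree ≤ 1 := by
      have := natDegree_hasseDeriv_le f n
      omega
    rw [coeff_sub, taylor_coeff, hn, Nat.add_sub_cancel, eq_X_add_C_of_natDegree_le_one h1,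
      leadingCoeff, hn]
    simp [hasseDeriv_coeff, add_comm 1 n]
    ring

theorem delta_deg (r : K) (f : K[X]) :
    (f - taylor r f).natDegree ≤ f.natDegree - 1 := by
  rcases Nat.eq_zero_or_pos f.natDegree with h | h
  · rw [eq_C_of_natDegree_eq_zero h]; simp
  · rw [natDegree_le_iff_coeff_eq_zero]
    intro N hN
    rcases eq_or_lt_of_le (show f.natDegree ≤ N by omega) with h2 | h2
    · subst h2; simp
    · rw [coeff_sub, coeff_eq_zero_of_natDegree_lt h2,
        coeff_eq_zero_of_natDegree_lt (by rwa [natDegree_taylor])]; simp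

theorem br_eq (i k : ℤ) (a b : K[X]) :
    br i k a b = b * (a - S k a) - a * (b - S i b) := by
  unfold br; ring

theorem br_const (i k : ℤ) (a b : K[X]) (ha : a.natDegree = 0) (hb : b.natDegree = 0) :
    br i k a b = 0 := by
  rw [eq_C_of_natDegree_eq_zero ha, eq_C_of_natDegree_eq_zero hb]
  simp [br, mul_comm]

theorem delta_mul_deg (r : K) (a b : K[X]) :
    (b * (a - taylor r a)).natDegree ≤ a.natDegree + b.natDegree - 1 := by
  rcases Nat.eq_zero_or_pos a.natDegree with h | h
  · rw [eq_C_of_natDegree_eq_zero h]; simp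
  · refine natDegree_mul_le.trans ?_
    have := delta_deg r a
    omega

theorem delta_mul_coeff (r : K) (a b : K[X]) :
    (b * (a - taylor r a)).coeff (a.natDegree + b.natDegree - 1) =
      -(r * a.natDegree * (a.leadingCoeff * b.leadingCoeff)) := by
  rcases Nat.eq_zero_or_pos a.natDegree with h | h
  · rw [eq_C_of_natDegree_eq_zero h]; simp
  · rw [show a.natDegree + b.natDegree - 1 = b.natDegree + (a.natDegree - 1) by omega,
      coeff_mul_add_eq_of_natDegree_le le_rfl (delta_deg r a), delta_coeff]
    simp only [leadingCoeff]
    ring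

theorem br_deg (i k : ℤ) (a b : K[X]) :
    (br i k a b).natDegree ≤ a.natDegree + b.natDegree - 1 := by
  rw [br_eq]
  refine (natDegree_sub_le _ _).trans (max_le (delta_mul_deg _ a b) ?_)
  have := delta_mul_deg (-(i:K)) b a
  rwa [add_comm] at this

theorem br_coeff (i k : ℤ) (a b : K[X]) :
    (br i k a b).coeff (a.natDegree + b.natDegree - 1) =
      (k * a.natDegree - i * b.natDegree) * (a.leadingCoeff * b.leadingCoeff) := by
  rw [br_eq, coeff_sub, delta_mul_coeff]
  have := delta_mul_coeff (-(i:K)) b a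
  rw [add_comm] at this
  rw [this]
  ring

theorem br_coeff_ne (i k : ℤ) (a b : K[X]) (ha : a ≠ 0) (hb : b ≠ 0)
    (h : k * a.natDegree ≠ i * b.natDegree) :
    (br i k a b).coeff (a.natDegree + b.natDegree - 1) ≠ 0 := by
  rw [br_coeff]
  refine mul_ne_zero ?_ (mul_ne_zero (by simpa) (by simpa))
  rw [sub_ne_zero]
  exact_mod_cast h

theorem br_natDegree (i k : ℤ) (a b : K[X]) (ha : a ≠ 0) (hb : b ≠ 0)
    (h : k * a.natDegree ≠ i * b.natDegree) :
    (br i k a b).natDegree = a.natDegree + b.natDegree - 1 :=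
  le_antisymm (br_deg i k a b) (le_natDegree_of_ne_zero (br_coeff_ne i k a b ha hb h))

theorem br_zero (i k : ℤ) (a b : K[X]) (ha : a ≠ 0) (hb : b ≠ 0) (h : br i k a b = 0) :
    k * a.natDegree = i * b.natDegree := by
  by_contra h2
  exact br_coeff_ne i k a b ha hb h2 (by rw [h]; simp)

theorem br_zero' (i k : ℤ) (a b : K[X]) (h : k * a.natDegree = i * b.natDegree)
    (h2 : a.natDegree + b.natDegree ≤ 1) : br i k a b = 0 := by
  have h3 := br_deg i k a b
  have h4 := br_coeff i k a b
  have e : a.natDegree + b.natDegree - 1 = 0 := by omega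
  have h5 : (k * a.natDegree : K) = i * b.natDegree := by exact_mod_cast h
  rw [e, h5, sub_self, zero_mul] at h4
  rw [e] at h3
  rw [eq_C_of_natDegree_le_zero h3, h4, C_0]

theorem br_neg_swap (i k : ℤ) (a b : K[X]) : br k i b a = - br i k a b := by
  unfold br; ring

/-- weight coefficients -/
def wt (i : ℤ) : K[X] := ascPochhammer K (-i).toNat

theorem wt_ne (i : ℤ) : (wt i : K[X]) ≠ 0 := (monic_ascPochhammer K _).ne_zero

theorem deg_wt (i : ℤ) (f : K[X]) (hf : f ≠ 0) :
    (f * wt i).natDegree = f.natDegree + (-i).toNat := by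
  rw [natDegree_mul hf (wt_ne i)]
  simp [wt, ascPochhammer_natDegree]

variable (K) in
/-- operators -/
def opX : Module.End K (ℤ → K[X]) where
  toFun φ n := S 1 (φ (n - 1))
  map_add' φ ψ := by funext n; simp [S]
  map_smul' c φ := by funext n; simp [S]

variable (K) in
def opY : Module.End K (ℤ → K[X]) where
  toFun φ n := X * S (-1) (φ (n + 1))
  map_add' φ ψ := by funext n; simp [S, mul_add]
  map_smul' c φ := by funext n; simp [S]

variable (K) in
def rho : Weyl K →ₐ[K] Module.End K (ℤ → K[X]) := wlift K (opX K) (opY K) (by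
  apply LinearMap.ext; intro φ; funext n
  simp [opX, opY, taylor_mul, taylor_taylor]
  ring)

theorem rho_X (φ : ℤ → K[X]) (n : ℤ) : rho K (Wx K) φ n = S 1 (φ (n - 1)) := by
  simp [rho, opX]

theorem rho_Y (φ : ℤ → K[X]) (n : ℤ) : rho K (Wy K) φ n = X * S (-1) (φ (n + 1)) := by
  simp [rho, opY]

theorem rho_H (φ : ℤ → K[X]) (n : ℤ) : rho K (WH K) φ n = X * φ n := by
  simp only [WH, map_mul, Module.End.mul_apply, rho_X, rho_Y]
  simp [taylor_taylor]

theorem rho_aeval (f : K[X]) (φ : ℤ → K[X]) (n : ℤ) :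
    rho K (aeval (WH K) f) φ n = f * φ n := by
  induction f using Polynomial.induction_on generalizing n with
  | C a => simp [Algebra.algebraMap_eq_smul_one, smul_eq_C_mul]
  | add p q hp hq => simp [hp, hq, add_mul]
  | monomial m a h =>
    rw [pow_succ', mul_left_comm, map_mul, map_mul, Module.End.mul_apply, aeval_X, rho_H, h]
    ring

theorem rho_Xpow (m : ℕ) (φ : ℤ → K[X]) (n : ℤ) :
    rho K (Wx K ^ m) φ n = S m (φ (n - m)) := by
  induction m generalizing n with
  | zero => simp [S]
  | succ m ih =>
    rw [pow_succ', map_mul, Module.End.mul_apply, rho_X, ih]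
    simp [taylor_taylor]
    congr 2
    · push_cast; ring
    · ring

theorem rho_Ypow (m : ℕ) (φ : ℤ → K[X]) (n : ℤ) :
    rho K (Wy K ^ m) φ n = ascPochhammer K m * S (-m) (φ (n + m)) := by
  induction m generalizing n with
  | zero => simp [S]
  | succ m ih =>
    rw [pow_succ', map_mul, Module.End.mul_apply, rho_Y, ih, ascPochhammer_succ_left]
    simp [taylor_taylor, taylor_mul, taylor_apply (1:K) (ascPochhammer K m)]
    rw [mul_assoc]
    congr 4
    · push_cast; ring
    · ring

/-- homogeneous element -/
def E (i : ℤ) (f : K[X]) : Weyl K := aeval (WH K) f * weight K i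

theorem rho_E (i : ℤ) (f : K[X]) (φ : ℤ → K[X]) (n : ℤ) :
    rho K (E i f) φ n = (f * wt i) * S i (φ (n - i)) := by
  rw [E, map_mul, Module.End.mul_apply, rho_aeval, mul_assoc]
  congr 1
  unfold weight
  split_ifs with h
  · obtain ⟨m, rfl⟩ := Int.eq_ofNat_of_zero_le h
    simp only [Int.toNat_natCast, rho_Xpow]
    simp [wt]
  · obtain ⟨m, hm⟩ := Int.eq_ofNat_of_zero_le (show 0 ≤ -i by omega)
    obtain rfl : i = -m := by omega
    simp only [neg_neg, Int.toNat_natCast, rho_Ypow]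
    simp [wt]

theorem E_mem (i : ℤ) (p : Weyl K) : p ∈ component K i ↔ ∃ f, p = E i f := by
  simp [component, E, eq_comm]

theorem comm_E (i k : ℤ) (f g : K[X]) (n : ℤ) :
    rho K (E i f * E k g - E k g * E i f) (Pi.single 0 1) n =
      if n = i + k then br i k (f * wt i) (g * wt k) else 0 := by
  rw [map_sub, map_mul, map_mul]
  simp only [LinearMap.sub_apply, Pi.sub_apply, Module.End.mul_apply, rho_E]
  split_ifs with h
  · subst h
    simp [br]
  · rw [Pi.single_eq_of_ne (by omega), Pi.single_eq_of_ne (by omega)]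
    simp

theorem main_eq (i j k l : ℤ) (f f' g g' : K[X])
    (h : (E i f + E j f') * (E k g + E l g') - (E k g + E l g') * (E i f + E j f') = 1) (n : ℤ) :
    (if n = i + k then br i k (f * wt i) (g * wt k) else 0) +
    (if n = i + l then br i l (f * wt i) (g' * wt l) else 0) +
    (if n = j + k then br j k (f' * wt j) (g * wt k) else 0) +
    (if n = j + l then br j l (f' * wt j) (g' * wt l) else 0) = if n = 0 then 1 else 0 := by
  have e : (E i f * E k g - E k g * E i f) + (E i f * E l g' - E l g' * E i f) +
    (E j f' * E k g - E k g * E j f') + (E j f' * E l g' - E l g' * E j f') = 1 := by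
    rw [← h]; noncomm_ring
  have := congrArg (fun t => rho K t (Pi.single 0 1) n) e
  simp only [map_add, LinearMap.add_apply, Pi.add_apply, comm_E] at this
  rw [this]
  simp [Pi.single_apply]
theorem wneg_smul (c : K) (p : Weyl K) : (-c) • p = -(c • p) := by
  apply eq_neg_of_add_eq_zero_left
  rw [← add_smul, neg_add_cancel, zero_smul]

theorem br_add_right (i k : ℤ) (a b c : K[X]) : br i k a (b + c) = br i k a b + br i k a c := by
  simp only [br, map_add]; ring

theorem br_C_mul_right (i k : ℤ) (a b : K[X]) (c : K) : br i k a (C c * b) = C c * br i k a b := by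
  simp only [br, S, taylor_mul, taylor_C]; ring

theorem br_self (i : ℤ) (a : K[X]) : br i i a a = 0 := by
  simp [br]

theorem br_00 (a b : K[X]) : br 0 0 a b = 0 := by
  simp [br, S, mul_comm]

theorem br_zero_left (i k : ℤ) (b : K[X]) : br i k 0 b = 0 := by simp [br]

theorem br_zero_right (i k : ℤ) (a : K[X]) : br i k a 0 = 0 := by simp [br]

theorem lead_wt (i : ℤ) (f : K[X]) : (f * wt i).leadingCoeff = f.leadingCoeff := by
  rw [leadingCoeff_mul, wt, (monic_ascPochhammer K _).leadingCoeff, mul_one]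

theorem E_add (i : ℤ) (f g : K[X]) : E i (f + g) = E i f + E i g := by
  simp [E, add_mul]

theorem E_zero (i : ℤ) : E i (0 : K[X]) = 0 := by simp [E]

theorem E_C_mul (i : ℤ) (c : K) (f : K[X]) : E i (C c * f) = c • E i f := by
  simp [E, Algebra.algebraMap_eq_smul_one]

theorem E_pos (i : ℤ) (h : 0 ≤ i) (c : K) : E i (C c) = c • Wx K ^ i.toNat := by
  simp [E, weight, h, Algebra.algebraMap_eq_smul_one]

theorem E_neg (i : ℤ) (h : i ≤ 0) (c : K) : E i (C c) = c • Wy K ^ (-i).toNat := by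
  rcases eq_or_lt_of_le h with rfl | h
  · simp [E, weight, Algebra.algebraMap_eq_smul_one]
  · simp [E, weight, not_le.2 h, Algebra.algebraMap_eq_smul_one]

theorem homog (i : ℤ) (f g : K[X]) (h : br i (-i) (f * wt i) (g * wt (-i)) = 1) :
    ∃ α β : K, f = C α ∧ g = C β ∧ (i = 1 ∧ α * β = -1 ∨ i = -1 ∧ α * β = 1) := by
  have hf : f ≠ 0 := by
    rintro rfl; simp [br] at h
  have hg : g ≠ 0 := by
    rintro rfl; simp [br] at h
  have hi : i ≠ 0 := by
    rintro rfl
    rw [neg_zero, br_00] at h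
    exact zero_ne_one h
  have ha := mul_ne_zero hf (wt_ne i)
  have hb := mul_ne_zero hg (wt_ne (-i))
  have d1 := deg_wt i f hf
  have d2 := deg_wt (-i) g hg
  have hd := br_natDegree i (-i) _ _ ha hb (by
    intro h2
    have h3 : i * (((f * wt i).natDegree : ℤ) + (g * wt (-i)).natDegree) = 0 := by linarith
    rcases mul_eq_zero.1 h3 with h3 | h3 <;> omega)
  have hc := br_coeff i (-i) (f * wt i) (g * wt (-i))
  rw [h, natDegree_one] at hd
  rw [← hd, h, lead_wt, lead_wt] at hc
  have hf0 : f.natDegree = 0 := by omega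
  have hg0 : g.natDegree = 0 := by omega
  obtain ⟨α, rfl⟩ : ∃ α, f = C α := ⟨_, eq_C_of_natDegree_eq_zero hf0⟩
  obtain ⟨β, rfl⟩ : ∃ β, g = C β := ⟨_, eq_C_of_natDegree_eq_zero hg0⟩
  refine ⟨α, β, rfl, rfl, ?_⟩
  rcases (show i = 1 ∨ i = -1 by omega) with rfl | rfl
  · left
    rw [d1, d2] at hc
    simp at hc
    exact ⟨rfl, by rw [hc]; ring⟩
  · right
    rw [d1, d2] at hc
    simp at hc
    exact ⟨rfl, by rw [hc]⟩

theorem form_base (α β : K) (h : α * β = -1) : Good K (α • Wx K) (β • Wy K) := by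
  have := (good_id (K := K)).rot.scale α (-β) (by rw [mul_neg, h, neg_neg])
  simpa using this

theorem form1 (α β γ δ : K) (q : ℕ) (h : α * β = -1) :
    Good K (α • Wx K + γ • 1) (β • Wy K + δ • Wx K ^ q) := by
  have hα : α ≠ 0 := by rintro rfl; simp at h
  have := ((form_base α β h).shear_right (C (δ * (α ^ q)⁻¹) * X ^ q)).shear_left (C γ)
  simpa [Algebra.algebraMap_eq_smul_one, _root_.smul_pow, smul_smul, hα] using this

theorem form2 (α β γ δ : K) (p : ℕ) (h : α * β = -1) :
    Good K (α • Wx K + γ • Wy K ^ p) (β • Wy K + δ • 1) := by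
  have hβ : β ≠ 0 := by rintro rfl; simp at h
  have := ((form_base α β h).shear_left (C (γ * (β ^ p)⁻¹) * X ^ p)).shear_right (C δ)
  simpa [Algebra.algebraMap_eq_smul_one, _root_.smul_pow, smul_smul, hβ] using this

theorem form0 (α β γ δ : K) (p q : ℕ) (h : α * β = -1) (h2 : γ = 0 ∨ δ = 0 ∨ p = 0 ∨ q = 0) :
    Good K (α • Wx K + γ • Wy K ^ p) (β • Wy K + δ • Wx K ^ q) := by
  rcases h2 with rfl | rfl | rfl | rfl
  · simpa using form1 α β 0 δ q h
  · simpa using form2 α β γ 0 p h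
  · simpa using form1 α β γ δ q h
  · simpa using form2 α β γ δ p h

theorem commX (α : K) (hα : α ≠ 0) (l : ℤ) (g : K[X]) (hg : g ≠ 0)
    (h : br 1 l (C α * wt 1) (g * wt l) = 0) : 0 ≤ l ∧ g.natDegree = 0 := by
  have h1 := br_zero _ _ _ _ (mul_ne_zero (C_ne_zero.2 hα) (wt_ne _)) (mul_ne_zero hg (wt_ne _)) h
  rw [deg_wt _ _ (C_ne_zero.2 hα), deg_wt _ _ hg] at h1
  simp at h1
  omega

theorem commY (β : K) (hβ : β ≠ 0) (j : ℤ) (f : K[X]) (hf : f ≠ 0)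
    (h : br j (-1) (f * wt j) (C β * wt (-1)) = 0) : j ≤ 0 ∧ f.natDegree = 0 := by
  have h1 := br_zero _ _ _ _ (mul_ne_zero hf (wt_ne _)) (mul_ne_zero (C_ne_zero.2 hβ) (wt_ne _)) h
  rw [deg_wt _ _ (C_ne_zero.2 hβ), deg_wt _ _ hf] at h1
  simp at h1
  omega

theorem caseI_pos (α β : K) (hαβ : α * β = -1) (j l : ℤ) (f' g' : K[X])
    (h1 : br 1 l (C α * wt 1) (g' * wt l) = 0)
    (h2 : br j (-1) (f' * wt j) (C β * wt (-1)) = 0)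
    (h3 : br j l (f' * wt j) (g' * wt l) = 0) :
    ∃ (γ δ : K) (p q : ℕ), (γ = 0 ∨ δ = 0 ∨ p = 0 ∨ q = 0) ∧
      E j f' = γ • Wy K ^ p ∧ E l g' = δ • Wx K ^ q := by
  have hα : α ≠ 0 := by rintro rfl; simp at hαβ
  have hβ : β ≠ 0 := by rintro rfl; simp at hαβ
  have A : ∃ (γ : K) (p : ℕ), E j f' = γ • Wy K ^ p ∧ (f' ≠ 0 → j = -p ∧ f'.natDegree = 0) := by
    by_cases hf : f' = 0
    · exact ⟨0, 0, by simp [hf, E_zero], fun h => absurd hf h⟩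
    · obtain ⟨hj, hd⟩ := commY β hβ j f' hf h2
      refine ⟨f'.coeff 0, (-j).toNat, ?_, fun _ => ⟨by omega, hd⟩⟩
      conv_lhs => rw [eq_C_of_natDegree_eq_zero hd]
      exact E_neg j hj _
  have B : ∃ (δ : K) (q : ℕ), E l g' = δ • Wx K ^ q ∧ (g' ≠ 0 → l = q ∧ g'.natDegree = 0) := by
    by_cases hg : g' = 0
    · exact ⟨0, 0, by simp [hg, E_zero], fun h => absurd hg h⟩
    · obtain ⟨hl, hd⟩ := commX α hα l g' hg h1
      refine ⟨g'.coeff 0, l.toNat, ?_, fun _ => ⟨by omega, hd⟩⟩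
      conv_lhs => rw [eq_C_of_natDegree_eq_zero hd]
      exact E_pos l hl _
  by_cases hf : f' = 0
  · obtain ⟨δ, q, hB, -⟩ := B
    exact ⟨0, δ, 0, q, Or.inl rfl, by simp [hf, E_zero], hB⟩
  by_cases hg : g' = 0
  · obtain ⟨γ, p, hA, -⟩ := A
    exact ⟨γ, 0, p, 0, Or.inr (Or.inl rfl), hA, by simp [hg, E_zero]⟩
  obtain ⟨γ, p, hA, hA2⟩ := A
  obtain ⟨δ, q, hB, hB2⟩ := B
  obtain ⟨rfl, df⟩ := hA2 hf
  obtain ⟨rfl, dg⟩ := hB2 hg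
  refine ⟨γ, δ, p, q, ?_, hA, hB⟩
  have h4 := br_zero _ _ _ _ (mul_ne_zero hf (wt_ne _)) (mul_ne_zero hg (wt_ne _)) h3
  rw [deg_wt _ _ hf, deg_wt _ _ hg, df, dg] at h4
  simp at h4
  tauto

theorem caseI (i k j l : ℤ) (hk : k = -i) (f f' g g' : K[X])
    (h0 : br i k (f * wt i) (g * wt k) = 1)
    (h1 : br i l (f * wt i) (g' * wt l) = 0)
    (h2 : br j k (f' * wt j) (g * wt k) = 0)
    (h3 : br j l (f' * wt j) (g' * wt l) = 0) :
    Good K (E i f + E j f') (E k g + E l g') := by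
  subst hk
  obtain ⟨α, β, rfl, rfl, ⟨rfl, h⟩ | ⟨rfl, h⟩⟩ := homog i f g h0
  · obtain ⟨γ, δ, p, q, hh, e1, e2⟩ := caseI_pos α β h j l f' g' h1 h2 h3
    rw [e1, e2, E_pos 1 (by norm_num), E_neg (-1) (by norm_num)]
    simpa using form0 α β γ δ p q h hh
  · rw [neg_neg] at *
    rw [br_neg_swap, neg_eq_zero] at h1 h2 h3
    have h' : β * -α = -1 := by rw [mul_neg, mul_comm, h]
    obtain ⟨γ, δ, p, q, hh, e1, e2⟩ := caseI_pos β (-α) h' l j g' f' h2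
      (by
        have := br_C_mul_right l (-1) (g' * wt l) (C α * wt (-1)) (-1)
        rw [h1, mul_zero] at this
        rw [← this]; congr 1; simp) h3
    rw [e1, e2, E_pos 1 (by norm_num), E_neg (-1) (by norm_num)]
    apply Good.unrot
    have := form0 β (-α) γ (-δ) p q h' (by simpa using hh)
    have n1 : (-α) • Wy K = -(α • Wy K) := wneg_smul _ _
    have n2 : (-δ) • Wx K ^ q = -(δ • Wx K ^ q) := wneg_smul _ _
    rw [n1, n2] at this
    simpa [add_comm] using this

theorem caseII_pos (α β : K) (hαβ : α * β ≠ 0) (j l : ℤ) (hl : l = j - 2) (f' g' : K[X])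
    (h1 : br 1 l (C α * wt 1) (g' * wt l) + br j (-1) (f' * wt j) (C β * wt (-1)) = 0)
    (h3 : br j l (f' * wt j) (g' * wt l) = 0) :
    br 1 l (C α * wt 1) (g' * wt l) = 0 := by
  by_contra hn
  have hα : α ≠ 0 := by rintro rfl; simp at hαβ
  have hβ : β ≠ 0 := by rintro rfl; simp at hαβ
  have hn2 : br j (-1) (f' * wt j) (C β * wt (-1)) ≠ 0 := by
    intro h; rw [h, add_zero] at h1; exact hn h1
  have hg : g' ≠ 0 := by rintro rfl; rw [zero_mul, br_zero_right] at hn; exact hn rfl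
  have hf : f' ≠ 0 := by rintro rfl; rw [zero_mul, br_zero_left] at hn2; exact hn2 rfl
  have ha := mul_ne_zero hf (wt_ne j)
  have hb := mul_ne_zero hg (wt_ne l)
  have hX := mul_ne_zero (C_ne_zero.2 hα) (wt_ne 1)
  have hY := mul_ne_zero (C_ne_zero.2 hβ) (wt_ne (-1))
  have dX : (C α * wt 1).natDegree = 0 := by rw [deg_wt _ _ (C_ne_zero.2 hα)]; simp
  have dY : (C β * wt (-1)).natDegree = 1 := by rw [deg_wt _ _ (C_ne_zero.2 hβ)]; simp
  have da := deg_wt j f' hf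
  have db := deg_wt l g' hg
  have e3 := br_zero _ _ _ _ ha hb h3
  have n1 : (g' * wt l).natDegree ≠ 0 := by
    intro h
    exact hn (br_const _ _ _ _ dX h)
  have e1 := br_natDegree 1 l _ _ hX hb (by rw [dX]; push_cast; omega)
  have n2 : ((f' * wt j).natDegree : ℤ) ≠ -j := by
    intro h
    apply hn2
    have hd : f'.natDegree = 0 := by omega
    have hj : j ≤ 0 := by omega
    have hc := comm_E j (-1) f' (C β) (j + -1)
    rw [if_pos rfl] at hc
    rw [← hc, eq_C_of_natDegree_eq_zero hd, E_neg j hj, E_neg (-1) (by norm_num)]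
    have : (f'.coeff 0 • Wy K ^ (-j).toNat) * (β • Wy K ^ (-(-1 : ℤ)).toNat) =
      (β • Wy K ^ (-(-1 : ℤ)).toNat) * (f'.coeff 0 • Wy K ^ (-j).toNat) := by
      rw [smul_mul_smul_comm, smul_mul_smul_comm, ← pow_add, ← pow_add, mul_comm β, add_comm]
    rw [sub_eq_zero.2 this, map_zero]; simp
  have e2 := br_natDegree j (-1) _ _ ha hY (by rw [dY]; push_cast; omega)
  have e4 : (br 1 l (C α * wt 1) (g' * wt l)).natDegree =
      (br j (-1) (f' * wt j) (C β * wt (-1))).natDegree := by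
    rw [eq_neg_of_add_eq_zero_left h1, natDegree_neg]
  rw [e1, e2, dX, dY] at e4
  have e5 : (g' * wt l).natDegree = (f' * wt j).natDegree + 1 := by omega
  rw [e5, hl] at e3
  push_cast at e3
  have e6 : j = -2 * (f' * wt j).natDegree := by linarith
  omega

theorem caseIII (i j : ℤ) (hij : i ≠ j) (f f' g g' : K[X])
    (h0 : br i (-i) (f * wt i) (g * wt (-i)) + br j (-j) (f' * wt j) (g' * wt (-j)) = 1)
    (h1 : br i (-j) (f * wt i) (g' * wt (-j)) = 0)
    (h2 : br j (-i) (f' * wt j) (g * wt (-i)) = 0) :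
    Good K (E i f + E j f') (E (-i) g + E (-j) g') := by
  by_cases c1 : br j (-j) (f' * wt j) (g' * wt (-j)) = 0
  · exact caseI i (-i) j (-j) rfl _ _ _ _ (by rwa [c1, add_zero] at h0) h1 h2 c1
  by_cases c2 : br i (-i) (f * wt i) (g * wt (-i)) = 0
  · rw [add_comm (E i f), add_comm (E (-i) g)]
    exact caseI j (-j) i (-i) rfl _ _ _ _ (by rwa [c2, zero_add] at h0) h2 h1 c2
  have hi : i ≠ 0 := by rintro rfl; rw [neg_zero, br_00] at c2; exact c2 rfl
  have hj : j ≠ 0 := by rintro rfl; rw [neg_zero, br_00] at c1; exact c1 rfl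
  have hf : f ≠ 0 := by rintro rfl; rw [zero_mul, br_zero_left] at c2; exact c2 rfl
  have hg : g ≠ 0 := by rintro rfl; rw [zero_mul, br_zero_right] at c2; exact c2 rfl
  have hf' : f' ≠ 0 := by rintro rfl; rw [zero_mul, br_zero_left] at c1; exact c1 rfl
  have hg' : g' ≠ 0 := by rintro rfl; rw [zero_mul, br_zero_right] at c1; exact c1 rfl
  have a1 := mul_ne_zero hf (wt_ne i)
  have a2 := mul_ne_zero hg (wt_ne (-i))
  have a3 := mul_ne_zero hf' (wt_ne j)
  have a4 := mul_ne_zero hg' (wt_ne (-j))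
  have d1 := deg_wt i f hf
  have d2 := deg_wt (-i) g hg
  have d3 := deg_wt j f' hf'
  have d4 := deg_wt (-j) g' hg'
  have e1 := br_zero _ _ _ _ a1 a4 h1
  have e2 := br_zero _ _ _ _ a3 a2 h2
  have b1 := br_natDegree i (-i) _ _ a1 a2 (by
    intro h2
    have h3 : i * (((f * wt i).natDegree : ℤ) + (g * wt (-i)).natDegree) = 0 := by linarith
    rcases mul_eq_zero.1 h3 with h3 | h3 <;> omega)
  have b2 := br_natDegree j (-j) _ _ a3 a4 (by
    intro h2
    have h3 : j * (((f' * wt j).natDegree : ℤ) + (g' * wt (-j)).natDegree) = 0 := by linarith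
    rcases mul_eq_zero.1 h3 with h3 | h3 <;> omega)
  have b3 : (f * wt i).natDegree + (g * wt (-i)).natDegree =
      (f' * wt j).natDegree + (g' * wt (-j)).natDegree := by
    rcases lt_trichotomy (br i (-i) (f * wt i) (g * wt (-i))).natDegree
      (br j (-j) (f' * wt j) (g' * wt (-j))).natDegree with h | h | h
    · have := natDegree_add_eq_right_of_natDegree_lt h
      rw [h0, natDegree_one] at this
      omega
    · omega
    · have := natDegree_add_eq_left_of_natDegree_lt h
      rw [h0, natDegree_one] at this
      omega
  have b4 : (i + j) * (((f * wt i).natDegree : ℤ) + (g * wt (-i)).natDegree) = 0 := by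
    zify at b3
    linear_combination i * b3 - e1 - e2
  have b5 : i + j = 0 := by
    rcases mul_eq_zero.1 b4 with h | h
    · exact h
    · omega
  obtain rfl : j = -i := by omega
  rw [neg_neg] at *
  have dd : g'.natDegree = f.natDegree := by
    have := mul_left_cancel₀ hi e1
    omega
  set c : K := g'.leadingCoeff / f.leadingCoeff with hc
  have hlf : f.leadingCoeff ≠ 0 := by simpa
  have hlg : g'.leadingCoeff ≠ 0 := by simpa
  have hc0 : c ≠ 0 := div_ne_zero hlg hlf
  have hr : g' = C c * f := by
    by_contra hne
    have hr0 : g' - C c * f ≠ 0 := sub_ne_zero.2 hne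
    have hlt : (g' - C c * f).degree < g'.degree := by
      apply degree_sub_lt_left _ hg'
      · rw [leadingCoeff_mul, leadingCoeff_C, hc]; field_simp
      · rw [degree_C_mul hc0, degree_eq_natDegree hg', degree_eq_natDegree hf, dd]
    have hlt' := natDegree_lt_natDegree hr0 hlt
    have hb : br i i (f * wt i) ((g' - C c * f) * wt i) = 0 := by
      have : (g' - C c * f) * wt i = g' * wt i + C (-c) * (f * wt i) := by
        simp; ring
      rw [this, br_add_right, br_C_mul_right, br_self, h1]; simp
    have := mul_left_cancel₀ hi (br_zero _ _ _ _ a1 (mul_ne_zero hr0 (wt_ne i)) hb)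
    rw [deg_wt _ _ hr0] at this
    omega
  have e : ∀ k, (g + C (-c) * f') * wt k = g * wt k + C (-c) * (f' * wt k) := by
    intro k; ring
  have key := caseI i (-i) (-i) 0 rfl f f' (g + C (-c) * f') 0 (by
      rw [e, br_add_right, br_C_mul_right, ← h0, hr, mul_assoc,
        br_C_mul_right, br_neg_swap i (-i)]
      simp) (by simp [br]) (by
      rw [e, br_add_right, br_C_mul_right, br_self, h2]; simp) (by simp [br])
  have := key.shear_right (C c * X)
  rw [E_add, E_C_mul, E_zero] at this
  rw [hr, E_C_mul]
  convert this using 1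
  have n1 : (-c) • E (-i) f' = -(c • E (-i) f') := wneg_smul _ _
  rw [n1]
  simp [Algebra.algebraMap_eq_smul_one]
  abel

theorem mainA (i j k l : ℤ) (hij : i ≠ j) (hkl : k ≠ l) (hik : i + k = 0) (f f' g g' : K[X])
    (h : (E i f + E j f') * (E k g + E l g') - (E k g + E l g') * (E i f + E j f') = 1) :
    Good K (E i f + E j f') (E k g + E l g') := by
  have M := main_eq i j k l f f' g g' h
  obtain rfl : k = -i := by omega
  by_cases hjl : j + l = 0
  · obtain rfl : l = -j := by omega
    apply caseIII i j hij
    · have := M 0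
      simpa [show ¬ (0 = i + -j) by omega, show ¬ (0 = j + -i) by omega] using this
    · have := M (i + -j)
      simpa [show ¬ (i + -j = 0) by omega, show ¬ (i + -j = j + -i) by omega] using this
    · have := M (j + -i)
      simpa [show ¬ (j + -i = 0) by omega, show ¬ (j + -i = i + -j) by omega] using this
  have h0 : br i (-i) (f * wt i) (g * wt (-i)) = 1 := by
    have := M 0
    simpa [show ¬ (0 = i + l) by omega, show ¬ (0 = j + -i) by omega,
      show ¬ (0 = j + l) by omega] using this
  have h3 : br j l (f' * wt j) (g' * wt l) = 0 := by
    have := M (j + l)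
    simpa [hjl, show ¬ (j + l = i + l) by omega, show ¬ (j + l = j + -i) by omega] using this
  by_cases hm : i + l = j + -i
  · have h4 : br i l (f * wt i) (g' * wt l) + br j (-i) (f' * wt j) (g * wt (-i)) = 0 := by
      have := M (i + l)
      simpa [← hm, show ¬ (i + l = 0) by omega, show ¬ (l = -i) by omega, hij] using this
    have h5 : br i l (f * wt i) (g' * wt l) = 0 := by
      obtain ⟨α, β, rfl, rfl, ⟨rfl, hh⟩ | ⟨rfl, hh⟩⟩ := homog i f g h0
      · exact caseII_pos α β (by rw [hh]; simp) j l (by omega) f' g' h4 h3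
      · rw [neg_neg] at *
        have h6 := caseII_pos β α (by rw [mul_comm, hh]; simp) l j (by omega) g' f'
          (by rw [br_neg_swap j 1, br_neg_swap (-1) l, ← neg_add, add_comm, h4, neg_zero])
          (by rw [br_neg_swap, h3, neg_zero])
        rw [br_neg_swap, neg_eq_zero] at h6
        rwa [h6, add_zero] at h4
    exact caseI i (-i) j l rfl _ _ _ _ h0 h5 (by rwa [h5, zero_add] at h4) h3
  · refine caseI i (-i) j l rfl _ _ _ _ h0 ?_ ?_ h3
    · have := M (i + l)
      simpa [hm, show ¬ (i + l = 0) by omega, show ¬ (l = -i) by omega, hij] using this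
    · have := M (j + -i)
      simpa [Ne.symm hm, show ¬ (j + -i = 0) by omega, show ¬ (-i = l) by omega, hij.symm,
        show ¬ (j + -i = i + l) by omega] using this

theorem mainB (i j k l : ℤ) (hij : i ≠ j) (hkl : k ≠ l) (f f' g g' : K[X])
    (h : (E i f + E j f') * (E k g + E l g') - (E k g + E l g') * (E i f + E j f') = 1) :
    Good K (E i f + E j f') (E k g + E l g') := by
  by_cases h1 : i + k = 0
  · exact mainA i j k l hij hkl h1 _ _ _ _ h
  by_cases h2 : i + l = 0
  · rw [add_comm (E k g)] at h ⊢
    exact mainA i j l k hij hkl.symm h2 _ _ _ _ h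
  by_cases h3 : j + k = 0
  · rw [add_comm (E i f)] at h ⊢
    exact mainA j i k l hij.symm hkl h3 _ _ _ _ h
  by_cases h4 : j + l = 0
  · rw [add_comm (E i f), add_comm (E k g)] at h ⊢
    exact mainA j i l k hij.symm hkl.symm h4 _ _ _ _ h
  have := main_eq i j k l f f' g g' h 0
  simp [Ne.symm h1, Ne.symm h2, Ne.symm h3, Ne.symm h4] at this

theorem rep (P : Weyl K) (h : ∃ i j : ℤ, P ∈ component K i ⊔ component K j) :
    ∃ (i j : ℤ) (f f' : K[X]), i ≠ j ∧ P = E i f + E j f' := by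
  obtain ⟨i, j, h⟩ := h
  obtain ⟨p, hp, q, hq, rfl⟩ := Submodule.mem_sup.1 h
  obtain ⟨f, rfl⟩ := (E_mem i p).1 hp
  obtain ⟨f', rfl⟩ := (E_mem j q).1 hq
  by_cases hij : i = j
  · subst hij
    exact ⟨i, i + 1, f + f', 0, by omega, by rw [E_add, E_zero, add_zero]⟩
  · exact ⟨i, j, f, f', hij, rfl⟩

variable (K)

/-- **Theorem 1 (Bavula–Levandovskyy).** If `P, Q` in the first Weyl algebra are sums of at
most two homogeneous components and `[P,Q] = 1`, then `P = τ(Y)`, `Q = τ(X)` for some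
`K`-algebra automorphism `τ` of `A₁`. -/
theorem dixmier_mass_le_two
    (P Q : Weyl K)
    (hP : ∃ i j : ℤ, P ∈ component K i ⊔ component K j)
    (hQ : ∃ i j : ℤ, Q ∈ component K i ⊔ component K j)
    (hPQ : P * Q - Q * P = 1) :
    ∃ τ : Weyl K ≃ₐ[K] Weyl K, P = τ (Wy K) ∧ Q = τ (Wx K) := by
  obtain ⟨i, j, f, f1, hij, rfl⟩ := rep P hP
  obtain ⟨k, l, g, g1, hkl, rfl⟩ := rep Q hQ
  exact mainB i j k l hij hkl f f1 g g1 hPQ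
end
end

section
/- Let A₁ be the first Weyl algebra over a field K of characteristic zero, with H = YX. For every integer p ≥ 2 and all nonzero polynomials α, β ∈ K[H], the elements P = αX^p and Q = βY^p satisfy [P,Q] ≠ 1. Equivalently, there are no homogeneous elements P ∈ A_{1,p}, Q ∈ A_{1,−p} with p ≥ 2 and [P,Q] = 1. -/
open Polynomial

noncomputable section

variable (K : Type) [Field K] [CharZero K]

/-- `X` acts by `f ↦ f(t-1)`. -/
def repX : Module.End K (K → K) where
  toFun f := fun t => f (t - 1)
  map_add' _ _ := rfl
  map_smul' _ _ := rfl

/-- `Y` acts by `f ↦ t f(t+1)`. -/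
def repY : Module.End K (K → K) where
  toFun f := fun t => t * f (t + 1)
  map_add' f g := by funext t; simp [mul_add]
  map_smul' c f := by funext t; simp [mul_left_comm]

/-- The representation of the Weyl algebra on functions. -/
def rep_s8 : Weyl K →ₐ[K] Module.End K (K → K) :=
  RingQuot.liftAlgHom K ⟨FreeAlgebra.lift K (fun b => if b then repX K else repY K), by
    intro a b h
    cases h
    ext f t
    simp [repX, repY]
    ring⟩

lemma rep_x : rep_s8 K (Wx K) = repX K := by
  simp [rep_s8, Wx]

lemma rep_y : rep_s8 K (Wy K) = repY K := by
  simp [rep_s8, Wy]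

lemma repX_pow (n : ℕ) (f : K → K) (t : K) : (repX K ^ n) f t = f (t - n) := by
  induction n generalizing f t with
  | zero => simp
  | succ n ih =>
    rw [pow_succ, Module.End.mul_apply, ih]
    simp [repX, sub_sub]

lemma repY_pow (n : ℕ) (f : K → K) (t : K) :
    (repY K ^ n) f t = (∏ i ∈ Finset.range n, (t + i)) * f (t + n) := by
  induction n generalizing f t with
  | zero => simp
  | succ n ih =>
    rw [pow_succ, Module.End.mul_apply, ih, Finset.prod_range_succ]
    simp [repY, add_assoc, mul_assoc]

lemma rep_H (a : K[X]) (f : K → K) (t : K) :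
    rep_s8 K (aeval (WH K) a) f t = a.eval t * f t := by
  induction a using Polynomial.induction_on' generalizing f t with
  | add p q hp hq => simp [hp, hq, add_mul]
  | monomial n c =>
    have h : ∀ (n : ℕ) (f : K → K) (t : K), ((repY K * repX K) ^ n) f t = t ^ n * f t := by
      intro n
      induction n with
      | zero => simp
      | succ n ih =>
        intro f t
        rw [pow_succ, Module.End.mul_apply, ih]
        simp [repX, repY, pow_succ, mul_assoc]
    rw [aeval_monomial, map_mul, map_pow, WH, map_mul, rep_x, rep_y, AlgHom.commutes,
      Module.End.mul_apply, Module.algebraMap_end_apply, Pi.smul_apply, h, eval_monomial,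
      smul_eq_mul, mul_assoc]

lemma key (p : ℕ) (hp : 2 ≤ p) (α β : K[X]) :
      (Polynomial.aeval (WH K) α * Wx K ^ p) * (Polynomial.aeval (WH K) β * Wy K ^ p) -
        (Polynomial.aeval (WH K) β * Wy K ^ p) * (Polynomial.aeval (WH K) α * Wx K ^ p) ≠ 1 := by
  intro h
  have h1 : ∀ t : K, α.eval t * (β.eval (t - p) * ∏ i ∈ Finset.range p, (t - p + i)) -
      β.eval t * ((∏ i ∈ Finset.range p, (t + i)) * α.eval (t + p)) = 1 := by
    intro t
    have := congrFun (congrArg (fun w => rep_s8 K w (fun _ => 1)) h) t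
    simpa [rep_x, rep_y, rep_H, repX_pow, repY_pow] using this
  obtain ⟨G, hG⟩ : ∃ G : K[X], ∀ t, G.eval t =
      α.eval t * (β.eval (t - p) * ∏ i ∈ Finset.range p, (t - p + i)) :=
    ⟨α * (β.comp (X - C (p : K)) * ∏ i ∈ Finset.range p, (X - C (p : K) + C (i : K))), by
      intro t; simp [eval_prod]⟩
  have hp0 : (p : K) ≠ 0 := by
    have : p ≠ 0 := by omega
    exact_mod_cast this
  have h2 : ∀ t : K, G.eval (t + p) = G.eval t - 1 := by
    intro t
    rw [← h1 t, hG, hG]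
    simp only [add_sub_cancel_right]
    ring
  have h3 : G.eval (p : K) = 0 := by
    rw [hG, Finset.prod_eq_zero (i := 0)] <;> simp
    omega
  have h4 : G.eval ((p : K) - 1) = 0 := by
    rw [hG, Finset.prod_eq_zero (i := 1)] <;> simp
    omega
  have h5 : ∀ k : ℕ, G.eval ((p : K) + k * p) = -k := by
    intro k
    induction k with
    | zero => simp [h3]
    | succ k ih =>
      have := h2 ((p : K) + k * p)
      rw [ih] at this
      push_cast
      rw [show (p : K) + (k + 1) * p = p + k * p + p by ring, this]
      ring
  have h6 : C (p : K) * G + X - C (p : K) = 0 := by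
    apply Polynomial.eq_zero_of_infinite_isRoot
    refine (Set.infinite_range_of_injective
      (f := fun k : ℕ => (p : K) + k * p) ?_).mono ?_
    · intro a b hab
      simpa [hp0] using hab
    · rintro _ ⟨k, rfl⟩
      simp only [Set.mem_ofPred_eq, IsRoot.def, eval_sub, eval_add, eval_mul, eval_C, eval_X, h5]
      ring
  have h7 := congrArg (eval ((p : K) - 1)) h6
  simp [h4] at h7

/-- **Step (ii) of the proof.** For `p ≥ 2` and nonzero `α, β ∈ K[H]`, the elements
`P = αX^p` and `Q = βY^p` never satisfy `[P,Q] = 1`; equivalently, there are no homogeneous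
`P ∈ A_{1,p}`, `Q ∈ A_{1,−p}` with `p ≥ 2` and `[P,Q] = 1`. -/
theorem no_homogeneous_pair (p : ℕ) (hp : 2 ≤ p) :
    (∀ α β : Polynomial K, α ≠ 0 → β ≠ 0 →
      (Polynomial.aeval (WH K) α * Wx K ^ p) * (Polynomial.aeval (WH K) β * Wy K ^ p) -
        (Polynomial.aeval (WH K) β * Wy K ^ p) * (Polynomial.aeval (WH K) α * Wx K ^ p) ≠ 1) ∧
    (∀ P ∈ component K (p : ℤ), ∀ Q ∈ component K (-(p : ℤ)), P * Q - Q * P ≠ 1) := by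
  refine ⟨fun α β _ _ => key K p hp α β, ?_⟩
  rintro _ ⟨α, rfl⟩ _ ⟨β, rfl⟩
  have h0 : p ≠ 0 := by omega
  have := key K p hp α β
  simpa [weight, h0] using this
end
end
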